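/- For every r > 0, every integer d ≥ 1, and all x, y ∈ ℝ^d with x ≠ y, the function x ↦ G_r(x,y) is differentiable at x, the integral ∫_0^∞ e^{−rt} (2πt)^{−d/2} exp(−‖x−y‖²/(2t)) · (‖x−y‖/t) dt is finite, and the gradient is obtained by differentiating under the integral sign: ∇_x G_r(x,y) = −∫_0^∞ e^{−rt} (2πt)^{−d/2} exp(−‖x−y‖²/(2t)) · ((x−y)/t) dt. -/

import Mathlib

/-!
The gradient of the Green kernel is computed by dominated differentiation under the integral sign.
For `a, β > 0` the elementary inequality `s ≤ exp s` bounds `(2πt)^(-β) * exp (-a / (2t))` by a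
constant independent of `t` (`rpow_mul_exp_le`). Taking `β = d / 2` shows that the integrand is
at most a multiple of `exp (-r t)`; taking `β = d / 2 + 1` gives the same for its derivative, which
carries an extra factor `1 / t`, uniformly for `‖z - y‖` bounded below
(`greenIntegrand_mul_inv_le`). Since `exp (-r t)` is integrable on `(0, ∞)`, domination holds on
the ball of radius `‖x - y‖ / 2` around `x`.
-/

open MeasureTheory

/-- The `r`-Green kernel of `d`-dimensional Brownian motion. -/
noncomputable def greenKernelReal (r : ℝ) (d : ℕ) (x y : EuclideanSpace ℝ (Fin d)) : ℝ :=
  ∫ t in Set.Ioi (0 : ℝ),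
    Real.exp (-r * t) * (2 * Real.pi * t) ^ (-(d : ℝ) / 2) *
      Real.exp (-‖x - y‖ ^ 2 / (2 * t))

/-- The integrand of the Green kernel as a function of the distance `ρ = ‖x - y‖` and of time. -/
noncomputable def greenIntegrand (r : ℝ) (d : ℕ) (ρ t : ℝ) : ℝ :=
  Real.exp (-r * t) * (2 * Real.pi * t) ^ (-(d : ℝ) / 2) * Real.exp (-ρ ^ 2 / (2 * t))

/-- A Gaussian factor absorbs any negative power of time: with `u = 1 / (2πt)` and
`K = β / (π a)`, this is `(u / K) ^ β ≤ exp (u / K) ^ β = exp (a / (2t))`. -/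
lemma rpow_mul_exp_le {a β t : ℝ} (ha : 0 < a) (hβ : 0 < β) (ht : 0 < t) :
    (2 * Real.pi * t) ^ (-β) * Real.exp (-a / (2 * t)) ≤ (β / (Real.pi * a)) ^ β := by
  have hpi := Real.pi_pos
  set K := β / (Real.pi * a) with hK
  have hK0 : 0 < K := by positivity
  set u := (2 * Real.pi * t)⁻¹ with hu
  have hu0 : 0 < u := by positivity
  have h1 : u / K ≤ Real.exp (u / K) := by linarith [Real.add_one_le_exp (u / K)]
  have h2 : (u / K) ^ β ≤ Real.exp (a / (2 * t)) := by
    calc (u / K) ^ β ≤ Real.exp (u / K) ^ β := Real.rpow_le_rpow (by positivity) h1 hβ.le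
      _ = Real.exp (a / (2 * t)) := by
        rw [← Real.exp_mul]
        congr 1
        rw [hu, hK]
        field_simp
  rw [Real.div_rpow hu0.le hK0.le, div_le_iff₀ (by positivity)] at h2
  have h3 : (2 * Real.pi * t) ^ (-β) = u ^ β := by
    rw [hu, Real.rpow_neg (by positivity), Real.inv_rpow (by positivity)]
  rw [h3, neg_div, Real.exp_neg, ← div_eq_mul_inv, div_le_iff₀ (Real.exp_pos _)]
  linarith

lemma greenIntegrand_nonneg (r : ℝ) (d : ℕ) (ρ : ℝ) {t : ℝ} (ht : 0 < t) :
    0 ≤ greenIntegrand r d ρ t := by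
  have hpi := Real.pi_pos
  unfold greenIntegrand
  positivity

lemma measurable_greenIntegrand (r : ℝ) (d : ℕ) (ρ : ℝ) :
    Measurable (greenIntegrand r d ρ) := by
  unfold greenIntegrand
  fun_prop

lemma integrableOn_exp_neg_mul {r : ℝ} (hr : 0 < r) (M : ℝ) :
    IntegrableOn (fun t => Real.exp (-r * t) * M) (Set.Ioi (0 : ℝ)) :=
  (exp_neg_integrableOn_Ioi 0 hr).mul_const M

lemma greenIntegrand_le (r : ℝ) {d : ℕ} (hd : 1 ≤ d) {ρ t : ℝ} (hρ : 0 < ρ) (ht : 0 < t) :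
    greenIntegrand r d ρ t ≤
      Real.exp (-r * t) * ((d / 2 : ℝ) / (Real.pi * ρ ^ 2)) ^ (d / 2 : ℝ) := by
  have hd' : (0 : ℝ) < d / 2 := by
    have : (0 : ℝ) < d := by exact_mod_cast hd
    positivity
  have h := rpow_mul_exp_le (pow_pos hρ 2) hd' ht
  unfold greenIntegrand
  rw [mul_assoc, neg_div (2 : ℝ) (d : ℝ)]
  gcongr

/-- The factor `1 / t` raises the power of time from `d / 2` to `d / 2 + 1`, so the differentiated
integrand is still dominated by a multiple of `exp (-r t)`, locally uniformly in `ρ > 0`. -/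
lemma greenIntegrand_mul_inv_le (r : ℝ) (d : ℕ) {ρ₀ ρ t : ℝ} (hρ₀ : 0 < ρ₀) (hρ : ρ₀ ≤ ρ)
    (ht : 0 < t) :
    greenIntegrand r d ρ t * (1 / t) ≤ Real.exp (-r * t) *
      (2 * Real.pi * ((d / 2 + 1 : ℝ) / (Real.pi * ρ₀ ^ 2)) ^ (d / 2 + 1 : ℝ)) := by
  have hpi := Real.pi_pos
  have hd' : (0 : ℝ) < d / 2 + 1 := by positivity
  have h := rpow_mul_exp_le (pow_pos hρ₀ 2) hd' ht
  have h1 : (2 * Real.pi * t) ^ (-(d : ℝ) / 2) * (1 / t)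
      = 2 * Real.pi * (2 * Real.pi * t) ^ (-(d / 2 + 1 : ℝ)) := by
    rw [show (-(d / 2 + 1 : ℝ)) = -(d : ℝ) / 2 - 1 by ring, Real.rpow_sub_one (by positivity)]
    field_simp
  have h2 : Real.exp (-ρ ^ 2 / (2 * t)) ≤ Real.exp (-ρ₀ ^ 2 / (2 * t)) := by gcongr
  calc greenIntegrand r d ρ t * (1 / t)
      = Real.exp (-r * t) * (2 * Real.pi *
        ((2 * Real.pi * t) ^ (-(d / 2 + 1 : ℝ)) * Real.exp (-ρ ^ 2 / (2 * t)))) := by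
        unfold greenIntegrand
        rw [← mul_assoc (2 * Real.pi), ← h1]
        ring
    _ ≤ _ := by
        gcongr
        refine le_trans ?_ h
        gcongr

lemma hasFDerivAt_greenIntegrand (r : ℝ) {d : ℕ} (y z : EuclideanSpace ℝ (Fin d)) {t : ℝ}
    (ht : 0 < t) :
    HasFDerivAt (fun z => greenIntegrand r d ‖z - y‖ t)
      ((-(greenIntegrand r d ‖z - y‖ t * (1 / t))) • innerSL ℝ (z - y)) z := by
  have h := ((((hasFDerivAt_id z).sub_const y).norm_sq.fun_neg.mul_const
    (2 * t)⁻¹).exp).const_mul (Real.exp (-r * t) * (2 * Real.pi * t) ^ (-(d : ℝ) / 2))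
  simp only [id, ← div_eq_mul_inv] at h
  refine h.congr_fderiv ?_
  ext v
  simp [greenIntegrand]
  field_simp

/-- For `r > 0`, `d ≥ 1` and `x ≠ y`, the map `x ↦ G_r(x,y)` is differentiable at `x`,
the integral `∫_0^∞ e^{-rt}(2πt)^{-d/2} e^{-‖x-y‖²/(2t)}·(‖x-y‖/t) dt` is finite, and the
gradient is obtained by differentiating under the integral sign:
`∇_x G_r(x,y) = -∫_0^∞ e^{-rt}(2πt)^{-d/2} e^{-‖x-y‖²/(2t)}·((x-y)/t) dt`. -/
theorem greenKernelReal_hasGradientAt (r : ℝ) (hr : 0 < r) (d : ℕ) (hd : 1 ≤ d)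
    (x y : EuclideanSpace ℝ (Fin d)) (hxy : x ≠ y) :
    DifferentiableAt ℝ (fun z => greenKernelReal r d z y) x ∧
      IntegrableOn
        (fun t =>
          Real.exp (-r * t) * (2 * Real.pi * t) ^ (-(d : ℝ) / 2) *
            Real.exp (-‖x - y‖ ^ 2 / (2 * t)) * (‖x - y‖ / t))
        (Set.Ioi (0 : ℝ)) ∧
      HasGradientAt (fun z => greenKernelReal r d z y)
        (-(∫ t in Set.Ioi (0 : ℝ),
            Real.exp (-r * t) * (2 * Real.pi * t) ^ (-(d : ℝ) / 2) *
              Real.exp (-‖x - y‖ ^ 2 / (2 * t)) * (1 / t)) • (x - y)) x := by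
  have hδ : 0 < ‖x - y‖ := norm_pos_iff.2 (sub_ne_zero.2 hxy)
  set δ := ‖x - y‖ with hδdef
  have key : HasFDerivAt (fun z => ∫ t in Set.Ioi (0 : ℝ), greenIntegrand r d ‖z - y‖ t)
      (∫ t in Set.Ioi (0 : ℝ),
        (-(greenIntegrand r d ‖x - y‖ t * (1 / t))) • innerSL ℝ (x - y)) x := by
    -- On this ball `δ / 2 ≤ ‖z - y‖ ≤ 2 * δ`, which keeps `z` away from the pole `y`.
    refine hasFDerivAt_integral_of_dominated_of_fderiv_le
      (F' := fun z t => (-(greenIntegrand r d ‖z - y‖ t * (1 / t))) • innerSL ℝ (z - y))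
      (bound := fun t => Real.exp (-r * t) * ((2 * Real.pi *
        ((d / 2 + 1 : ℝ) / (Real.pi * (δ / 2) ^ 2)) ^ (d / 2 + 1 : ℝ)) * (2 * δ)))
      (Metric.ball_mem_nhds x (half_pos hδ)) ?_ ?_ ?_ ?_ (integrableOn_exp_neg_mul hr _) ?_
    · exact .of_forall fun z => (measurable_greenIntegrand r d _).aestronglyMeasurable
    · refine (integrableOn_exp_neg_mul hr
        (((d / 2 : ℝ) / (Real.pi * δ ^ 2)) ^ (d / 2 : ℝ))).mono'
        (measurable_greenIntegrand r d _).aestronglyMeasurable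
        ((ae_restrict_iff' measurableSet_Ioi).2 (.of_forall fun t ht => ?_))
      rw [Real.norm_of_nonneg (greenIntegrand_nonneg r d _ ht)]
      exact greenIntegrand_le r hd hδ ht
    · have := measurable_greenIntegrand r d ‖x - y‖
      exact AEStronglyMeasurable.smul_const
        (Measurable.aestronglyMeasurable (by fun_prop)) _
    · refine (ae_restrict_iff' measurableSet_Ioi).2 (.of_forall fun t ht z hz => ?_)
      have ht0 : (0 : ℝ) < t := ht
      rw [Metric.mem_ball, dist_eq_norm] at hz
      have h1 : δ ≤ ‖z - y‖ + ‖z - x‖ := by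
        have := norm_sub_le (z - y) (z - x)
        rwa [sub_sub_sub_cancel_left] at this
      have h2 : ‖z - y‖ ≤ ‖z - x‖ + δ := by
        have := norm_add_le (z - x) (x - y)
        rwa [sub_add_sub_cancel] at this
      have h3 := greenIntegrand_mul_inv_le r d (half_pos hδ)
        (show δ / 2 ≤ ‖z - y‖ by linarith) ht0
      have h4 : 0 ≤ greenIntegrand r d ‖z - y‖ t * (1 / t) :=
        mul_nonneg (greenIntegrand_nonneg r d _ ht0) (by positivity)
      rw [norm_smul, norm_neg, Real.norm_of_nonneg h4, innerSL_apply_norm, ← mul_assoc]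
      exact mul_le_mul h3 (by linarith) (norm_nonneg _) (h4.trans h3)
    · exact (ae_restrict_iff' measurableSet_Ioi).2
        (.of_forall fun t ht z _ => hasFDerivAt_greenIntegrand r y z ht)
  have hgrad : HasGradientAt (fun z => greenKernelReal r d z y)
      (-(∫ t in Set.Ioi (0 : ℝ), greenIntegrand r d ‖x - y‖ t * (1 / t)) • (x - y)) x := by
    rw [hasGradientAt_iff_hasFDerivAt]
    refine HasFDerivAt.congr_fderiv key ?_
    rw [integral_smul_const, integral_neg]
    ext v
    simp
  refine ⟨hgrad.differentiableAt, ?_, hgrad⟩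
  have hm := measurable_greenIntegrand r d δ
  have hint : IntegrableOn (fun t => greenIntegrand r d δ t * (1 / t)) (Set.Ioi (0 : ℝ)) := by
    refine (integrableOn_exp_neg_mul hr (2 * Real.pi *
      ((d / 2 + 1 : ℝ) / (Real.pi * δ ^ 2)) ^ (d / 2 + 1 : ℝ))).mono'
      (Measurable.aestronglyMeasurable (by fun_prop))
      ((ae_restrict_iff' measurableSet_Ioi).2 (.of_forall fun t ht => ?_))
    have ht0 : (0 : ℝ) < t := ht
    rw [Real.norm_of_nonneg (mul_nonneg (greenIntegrand_nonneg r d _ ht0) (by positivity))]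
    exact greenIntegrand_mul_inv_le r d hδ le_rfl ht0
  refine IntegrableOn.congr_fun (hint.mul_const δ) (fun t _ => ?_) measurableSet_Ioi
  simp only [greenIntegrand]
  ring
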